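/- arXiv:1006.1532 — 2 statements merged into one kernel-verified Lean document; each statement's English description precedes it below -/
import Mathlib

section
/- Generalized Hill formula: for a periodic linear discrete Lagrangian system with monodromy matrix P (regarded as a complex 2m×2m matrix) and for every ρ ∈ ℂ with ρ ≠ 0, one has ρ^{−m} · det(P − ρ·I_{2m}) = (−1)^m · det(H_ρ) / (∏_{i=1}^n det B_i). -/
open Matrix BigOperators

/-- The transfer matrix `T_i` of a periodic linear discrete Lagrangian system. -/
noncomputable def transferMatrix (m : ℕ) (A B : ℤ → Matrix (Fin m) (Fin m) ℝ) (i : ℤ) :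
    Matrix (Fin m ⊕ Fin m) (Fin m ⊕ Fin m) ℝ :=
  Matrix.fromBlocks 0 1 (-(((B i)ᵀ)⁻¹ * B (i - 1))) (((B i)ᵀ)⁻¹ * A i)

/-- The monodromy matrix `P = T_n ⋯ T_1`. -/
noncomputable def monodromy (m n : ℕ) (A B : ℤ → Matrix (Fin m) (Fin m) ℝ) :
    Matrix (Fin m ⊕ Fin m) (Fin m ⊕ Fin m) ℝ :=
  (List.range n).foldl (fun M i => transferMatrix m A B ((i : ℤ) + 1) * M) 1

/-- The `ρ`-Hessian `H_ρ`: the complex `(mn) × (mn)` matrix acting by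
`(H_ρ u)_i = A_i u_i - B_{i-1} u_{i-1} - B_iᵀ u_{i+1}` with the quasiperiodic
conventions `u_0 = ρ⁻¹ u_n`, `u_{n+1} = ρ u_1`. -/
noncomputable def rhoHessian (m n : ℕ) [NeZero n] (A B : ℤ → Matrix (Fin m) (Fin m) ℝ)
    (ρ : ℂ) : Matrix (Fin n × Fin m) (Fin n × Fin m) ℂ :=
  fun p q =>
    (if q.1 = p.1 then (A ((p.1 : ℕ) : ℤ) p.2 q.2 : ℂ) else 0)
    + (if q.1 = p.1 - 1 then
        -((if (p.1 : ℕ) = 0 then ρ⁻¹ else 1) * (B (((p.1 : ℕ) : ℤ) - 1) p.2 q.2 : ℂ)) else 0)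
    + (if q.1 = p.1 + 1 then
        -((if (p.1 : ℕ) = n - 1 then ρ else 1) * (B ((p.1 : ℕ) : ℤ) q.2 p.2 : ℂ)) else 0)


/-- Flatten a matrix of square blocks. -/
def hillFlat {n : ℕ} {ι : Type} (M : Matrix (Fin n) (Fin n) (Matrix ι ι ℂ)) :
    Matrix (Fin n × ι) (Fin n × ι) ℂ :=
  Matrix.of fun p q => M p.1 q.1 p.2 q.2

theorem hillFlat_mul {n : ℕ} {ι : Type} [Fintype ι]
    (M K : Matrix (Fin n) (Fin n) (Matrix ι ι ℂ)) :
    hillFlat (M * K) = hillFlat M * hillFlat K := by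
  ext p q
  simp [hillFlat, Matrix.mul_apply, Matrix.sum_apply, Fintype.sum_prod_type]

theorem hillFlat_one {n : ℕ} {ι : Type} [DecidableEq ι] :
    hillFlat (1 : Matrix (Fin n) (Fin n) (Matrix ι ι ℂ)) = 1 := by
  ext ⟨i, a⟩ ⟨j, b⟩
  by_cases h : i = j <;> simp [hillFlat, Matrix.one_apply, h]

theorem hillFlat_det_upper {n : ℕ} {ι : Type} [Fintype ι] [DecidableEq ι]
    (M : Matrix (Fin n) (Fin n) (Matrix ι ι ℂ)) (h : ∀ i j, j < i → M i j = 0) :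
    (hillFlat M).det = ∏ i, (M i i).det := by
  have hb : BlockTriangular (hillFlat M) (Prod.fst : Fin n × ι → Fin n) := by
    intro p q hpq
    simp [hillFlat, h _ _ hpq]
  rw [hb.det_fintype]
  refine Finset.prod_congr rfl fun k _ => ?_
  let e : ι ≃ {p : Fin n × ι // p.1 = k} :=
    { toFun := fun a => ⟨(k, a), rfl⟩
      invFun := fun p => p.1.2
      left_inv := fun a => rfl
      right_inv := by rintro ⟨⟨i, a⟩, rfl⟩; rfl }
  rw [← Matrix.det_submatrix_equiv_self e]
  rfl

theorem hillFlat_det_lower {n : ℕ} {ι : Type} [Fintype ι] [DecidableEq ι]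
    (M : Matrix (Fin n) (Fin n) (Matrix ι ι ℂ)) (h : ∀ i j, i < j → M i j = 0) :
    (hillFlat M).det = ∏ i, (M i i).det := by
  have e : (hillFlat M)ᵀ = hillFlat (Matrix.of fun i j => (M j i)ᵀ) := by
    ext p q; rfl
  rw [← Matrix.det_transpose, e, hillFlat_det_upper]
  · simp
  · intro i j hij
    simp [h _ _ hij]

/-- Ordered products. -/
def hillProd {M : Type} [Monoid M] (T : ℕ → M) : ℕ → M
  | 0 => 1
  | k + 1 => T k * hillProd T k

theorem hillProd_succ' {M : Type} [Monoid M] (T : ℕ → M) (k : ℕ) :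
    hillProd T (k + 1) = hillProd (fun i => T (i + 1)) k * T 0 := by
  induction k with
  | zero => simp [hillProd]
  | succ k ih => rw [hillProd, ih, hillProd, mul_assoc]

theorem hillProd_back {M : Type} [Monoid M] (T : ℕ → M) (n : ℕ) :
    ∃ R : ℕ → M, R n = 1 ∧ R 0 = hillProd T n ∧ ∀ k < n, R k = R (k + 1) * T k := by
  induction n with
  | zero => exact ⟨fun _ => 1, rfl, rfl, by simp⟩
  | succ n ih =>
    obtain ⟨R, h1, h0, hs⟩ := ih
    refine ⟨fun k => if k ≤ n then T n * R k else 1, by simp, by simp [h0, hillProd], ?_⟩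
    intro k hk
    rcases Nat.lt_or_ge k n with h | h
    · have h' : k + 1 ≤ n := h
      simp [h.le, h', hs k h, mul_assoc]
    · obtain rfl : k = n := by omega
      simp [h1]

/-- The cyclic shift with multiplier `ρ`. -/
def hillShift (N : ℕ) (ι : Type) [DecidableEq ι] (ρ : ℂ) :
    Matrix (Fin (N + 1)) (Fin (N + 1)) (Matrix ι ι ℂ) :=
  Matrix.of fun i j => if j = i + 1 then (if i = Fin.last N then ρ • 1 else 1) else 0

theorem hill_perm_det (N : ℕ) (ι : Type) [Fintype ι] [DecidableEq ι] :
    (hillFlat (hillShift N ι 1)).det = ((-1) ^ N) ^ Fintype.card ι := by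
  have : hillFlat (hillShift N ι 1) =
      Matrix.kronecker ((finRotate (N + 1)).permMatrix ℂ) (1 : Matrix ι ι ℂ) := by
    ext ⟨i, a⟩ ⟨j, b⟩
    by_cases h : j = i + 1 
    · simp [hillFlat, hillShift, h, PEquiv.toMatrix_apply, Equiv.toPEquiv_apply]
    · simp [hillFlat, hillShift, h, PEquiv.toMatrix_apply, Equiv.toPEquiv_apply, Ne.symm h]
  rw [this]
  erw [Matrix.det_kronecker]
  rw [Matrix.det_permutation, sign_finRotate]
  simp

theorem hill_cyc (N : ℕ) (ι : Type) [Fintype ι] [DecidableEq ι] (ρ : ℂ)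
    (T : ℕ → Matrix ι ι ℂ) :
    (hillFlat (hillShift N ι ρ - Matrix.diagonal fun i : Fin (N + 1) => T i)).det =
      ((-1) ^ N) ^ Fintype.card ι * (ρ • 1 - hillProd T (N + 1)).det := by
  obtain ⟨R, h1, h0, hs⟩ := hillProd_back T (N + 1)
  let E : Matrix (Fin (N + 1)) (Fin (N + 1)) (Matrix ι ι ℂ) := Matrix.of fun i k =>
    if i = 0 then (if k = 0 then ρ • 1 else 0) - R k else if i = k then 1 else 0
  let W : Matrix (Fin (N + 1)) (Fin (N + 1)) (Matrix ι ι ℂ) := Matrix.of fun k j =>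
    (if k = j then 1 else 0) - (if (k : ℕ) = j + 1 then T j else 0)
  have hEdet : (hillFlat E).det = (ρ • 1 - hillProd T (N + 1)).det := by
    rw [hillFlat_det_upper, Fin.prod_univ_succ]
    · simp [E, h0, Fin.succ_ne_zero]
    · intro i j hij
      have : i ≠ 0 := by rintro rfl; exact absurd hij (Fin.not_lt_zero j)
      simp [E, this, hij.ne']
  have hWdet : (hillFlat W).det = 1 := by
    rw [hillFlat_det_lower]
    · simp [W]
    · intro i j hij
      have h2 : ¬ ((i : ℕ) = j + 1) := by have := Fin.lt_def.1 hij; omega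
      simp [W, hij.ne, h2]
  have hEW : ∀ i j, (E * W) i j = if i = 0 then (if j = 0 then ρ • 1 else 0) -
      (if j = Fin.last N then T j else 0) else W i j := by
    intro i j
    rw [Matrix.mul_apply]
    by_cases hi : i = 0
    · subst hi
      simp only [E, W, Matrix.of_apply, if_true, mul_sub, Finset.sum_sub_distrib]
      have e1 : ∑ k : Fin (N + 1), (((if k = 0 then ρ • 1 else 0) - R k) *
          (if k = j then (1 : Matrix ι ι ℂ) else 0)) = (if j = 0 then ρ • 1 else 0) - R j := by
        rw [Finset.sum_eq_single j] <;> simp +contextual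
      have e2 : ∑ k : Fin (N + 1), (((if k = 0 then ρ • 1 else 0) - R k) *
          (if (k : ℕ) = j + 1 then T j else 0)) =
            if j = Fin.last N then 0 else - (R (j + 1) * T j) := by
        split_ifs with hj
        · subst hj
          refine Finset.sum_eq_zero fun k _ => ?_
          have : ¬ ((k : ℕ) = (Fin.last N : ℕ) + 1) := by
            have := k.2; simp only [Fin.val_last]; omega
          rw [if_neg this, mul_zero]
        · have hlt : (j : ℕ) + 1 < N + 1 := by
            have := j.2
            have : (j : ℕ) ≠ N := fun h => hj (Fin.ext h)
            omega
          rw [Finset.sum_eq_single (⟨j + 1, hlt⟩ : Fin (N + 1))]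
          · have hz : (⟨(j : ℕ) + 1, hlt⟩ : Fin (N + 1)) ≠ 0 := by
              intro h
              have := congrArg Fin.val h
              simp at this
            rw [if_neg hz, if_pos rfl, zero_sub, neg_mul]
          · intro k _ hk
            have : ¬ ((k : ℕ) = (j : ℕ) + 1) := fun h => hk (Fin.ext h)
            simp [this]
          · simp
      rw [e1, e2, hs j j.2]
      by_cases hj : j = Fin.last N
      · subst hj
        simp [h1]
      · simp [hj]
    · rw [Finset.sum_eq_single i]
      · simp [E, hi]
      · intro k _ hk
        simp [E, hi, hk.symm]
      · simp
  have hM : hillShift N ι ρ - Matrix.diagonal (fun i : Fin (N + 1) => T i) =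
      hillShift N ι 1 * (E * W) := by
    ext1 i j
    rw [Matrix.mul_apply, Finset.sum_eq_single (i + 1)]
    · rw [hEW]
      by_cases hi : i = Fin.last N
      · subst hi
        by_cases hj : j = Fin.last N
        · subst hj
          simp [hillShift]
        · simp [hillShift, hj, Ne.symm hj]
      · have hlt : (i : ℕ) < N := by
          have := i.2
          have : (i : ℕ) ≠ N := fun h => hi (Fin.ext h)
          omega
        have hv : ((i + 1 : Fin (N + 1)) : ℕ) = i + 1 := Fin.val_add_one_of_lt (Fin.lt_def.2 hlt)
        have h0 : i + 1 ≠ 0 := by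
          intro h; rw [h] at hv; simp at hv
        simp only [hillShift, W, hi, h0, hv, Matrix.sub_apply, Matrix.of_apply, if_false, if_true,
          Matrix.diagonal_apply, one_mul, add_left_inj, Fin.val_inj]
        by_cases hij : i = j
        · subst hij; simp [eq_comm]
        · simp [hij, eq_comm]
    · intro k _ hk
      simp [hillShift, hk]
    · simp
  rw [hM, hillFlat_mul, hillFlat_mul, Matrix.det_mul, Matrix.det_mul, hEdet, hWdet, hill_perm_det,
    mul_one]

theorem hill_shift_det (N : ℕ) (ι : Type) [Fintype ι] [DecidableEq ι] (ρ : ℂ) :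
    (hillFlat (hillShift N ι ρ)).det = ((-1) ^ N) ^ Fintype.card ι * ρ ^ Fintype.card ι := by
  have := hill_cyc N ι ρ (fun _ => 0)
  simpa [hillProd, Matrix.det_smul] using this

/-- The inverse shift. -/
noncomputable def hillShiftInv (N : ℕ) (ι : Type) [DecidableEq ι] (ρ : ℂ) :
    Matrix (Fin (N + 1)) (Fin (N + 1)) (Matrix ι ι ℂ) :=
  Matrix.of fun i j => if j = i - 1 then (if i = 0 then ρ⁻¹ • 1 else 1) else 0

theorem hill_shift_mul_inv (N : ℕ) (ι : Type) [Fintype ι] [DecidableEq ι] (ρ : ℂ) (hρ : ρ ≠ 0) :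
    hillShift N ι ρ * hillShiftInv N ι ρ = 1 := by
  ext1 i j
  rw [Matrix.mul_apply, Finset.sum_eq_single (i + 1)]
  · simp only [hillShift, hillShiftInv, Matrix.of_apply, if_true, add_sub_cancel_right,
      Matrix.one_apply, eq_comm (a := j)]
    by_cases hij : i = j
    · subst hij
      by_cases hi : i = Fin.last N
      · subst hi; simp [smul_smul, hρ]
      · have h0 : i + 1 ≠ 0 := by
          intro h
          apply hi
          have h2 : i + 1 = Fin.last N + 1 := by simp [h]
          exact add_right_cancel h2
        simp [hi, h0]
    · simp [hij]
  · intro k _ hk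
    simp [hillShift, hk]
  · simp

theorem hill_core (N m : ℕ) (ρ : ℂ) (hρ : ρ ≠ 0)
    (a b d e : ℕ → Matrix (Fin m) (Fin m) ℂ) (hed : ∀ i, e i * d i = 1) :
    (hillFlat (Matrix.diagonal (fun i : Fin (N + 1) => a i)
      - Matrix.diagonal (fun i : Fin (N + 1) => b i) * hillShiftInv N (Fin m) ρ
      - Matrix.diagonal (fun i : Fin (N + 1) => d i) * hillShift N (Fin m) ρ)).det
      * (∏ i : Fin (N + 1), (e i).det) * (-1) ^ m * ρ ^ m =
    (ρ • 1 - hillProd (fun i => Matrix.fromBlocks 0 1 (-(e i * b i)) (e i * a i)) (N + 1)).det := by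
  have hc := hill_cyc N (Fin m ⊕ Fin m) ρ
    (fun i => Matrix.fromBlocks 0 1 (-(e i * b i)) (e i * a i))
  set S := hillShift N (Fin m) ρ with hS
  set S' := hillShiftInv N (Fin m) ρ with hS'
  set H := Matrix.diagonal (fun i : Fin (N + 1) => a i)
      - Matrix.diagonal (fun i : Fin (N + 1) => b i) * S'
      - Matrix.diagonal (fun i : Fin (N + 1) => d i) * S with hH
  have hSS : hillFlat S * hillFlat S' = 1 := by
    rw [← hillFlat_mul, hS, hS', hill_shift_mul_inv N _ ρ hρ, hillFlat_one]
  let _ : Invertible (hillFlat S) :=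
    ⟨hillFlat S', mul_eq_one_comm.1 hSS, hSS⟩
  have hinv : ⅟(hillFlat S) = hillFlat S' := invOf_eq_right_inv hSS
  have hblk : (hillFlat (hillShift N (Fin m ⊕ Fin m) ρ - Matrix.diagonal fun i : Fin (N + 1) =>
      (Matrix.fromBlocks 0 1 (-(e i * b i)) (e i * a i)))).submatrix
        (Equiv.prodSumDistrib _ _ _).symm (Equiv.prodSumDistrib _ _ _).symm =
      Matrix.fromBlocks (hillFlat S) (-1)
        (hillFlat (Matrix.diagonal fun i : Fin (N + 1) => e i * b i))
        (hillFlat (S - Matrix.diagonal fun i : Fin (N + 1) => e i * a i)) := by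
    ext p q
    rcases p with ⟨i, x⟩ | ⟨i, x⟩ <;> rcases q with ⟨j, y⟩ | ⟨j, y⟩ <;>
    simp only [hillFlat, hS, hillShift, Matrix.diagonal_apply, Matrix.one_apply,
      Matrix.submatrix_apply, Matrix.of_apply, Matrix.sub_apply, Matrix.neg_apply,
      Equiv.prodSumDistrib_symm_apply_left, Equiv.prodSumDistrib_symm_apply_right,
      Matrix.fromBlocks_apply₁₁, Matrix.fromBlocks_apply₁₂, Matrix.fromBlocks_apply₂₁,
      Matrix.fromBlocks_apply₂₂, Prod.mk.injEq] <;>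
    split_ifs <;> simp_all [Matrix.one_apply]
  have hdiag : hillFlat (S - Matrix.diagonal fun i : Fin (N + 1) => e i * a i) -
      hillFlat (Matrix.diagonal fun i : Fin (N + 1) => e i * b i) * hillFlat S' * (-1) =
      - (hillFlat (Matrix.diagonal fun i : Fin (N + 1) => e i) * hillFlat H) := by
    have h1 : (Matrix.diagonal fun i : Fin (N + 1) => e i) * H =
      (Matrix.diagonal fun i : Fin (N + 1) => e i * a i)
      - (Matrix.diagonal fun i : Fin (N + 1) => e i * b i) * S' - S := by
      rw [hH, mul_sub, mul_sub, ← mul_assoc, ← mul_assoc, Matrix.diagonal_mul_diagonal,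
        Matrix.diagonal_mul_diagonal, Matrix.diagonal_mul_diagonal]
      simp [hed]
    rw [← hillFlat_mul, ← hillFlat_mul, h1]
    generalize (Matrix.diagonal fun i : Fin (N + 1) => e i * b i) * S' = X
    rw [mul_neg, mul_one]
    ext p q
    simp [hillFlat]
    ring
  rw [← Matrix.det_submatrix_equiv_self (Equiv.prodSumDistrib _ _ _).symm, hblk,
    Matrix.det_fromBlocks₁₁, hinv, hdiag, Matrix.det_neg, Matrix.det_mul, hill_shift_det,
    hillFlat_det_upper (Matrix.diagonal fun i : Fin (N + 1) => e i)
      (fun i j hij => Matrix.diagonal_apply_ne _ hij.ne')] at hc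
  simp only [Fintype.card_prod, Fintype.card_fin, Fintype.card_sum, Matrix.diagonal_apply_eq] at hc
  have s1 : (((-1 : ℂ)) ^ N) ^ (m + m) = 1 := by
    rw [← pow_mul, ← two_mul, mul_left_comm, pow_mul]; simp
  have s2 : (((-1 : ℂ)) ^ N) ^ m * (-1) ^ ((N + 1) * m) = (-1) ^ m := by
    rw [← pow_mul, ← pow_add, show N * m + (N + 1) * m = 2 * (N * m) + m by ring, pow_add, pow_mul]
    simp
  rw [s1, one_mul] at hc
  rw [← hc, ← s2]
  ring

theorem hill_monodromy (m n : ℕ) (A B : ℤ → Matrix (Fin m) (Fin m) ℝ) :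
    (monodromy m n A B).map Complex.ofReal =
      hillProd (fun i : ℕ => (transferMatrix m A B ((i : ℤ) + 1)).map Complex.ofReal) n := by
  induction n with
  | zero =>
    simp [monodromy, hillProd]
  | succ n ih =>
    rw [hillProd, ← ih]
    have h : monodromy m (n + 1) A B =
        transferMatrix m A B ((n : ℤ) + 1) * monodromy m n A B := by
      unfold monodromy
      rw [List.range_succ]
      simp
    rw [h]
    exact Matrix.map_mul (L := transferMatrix m A B ((n : ℤ) + 1)) (M := monodromy m n A B)
      (f := Complex.ofRealHom)

/-- **Generalized Hill formula**: for every `ρ ≠ 0`,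
`ρ^{-m} det(P - ρ I) = (-1)^m · det H_ρ / ∏_{i=1}^n det B_i`. -/
theorem generalized_hill_formula (m n : ℕ) (hm : 0 < m) [NeZero n]
    (A B : ℤ → Matrix (Fin m) (Fin m) ℝ)
    (hAper : ∀ i, A (i + n) = A i) (hBper : ∀ i, B (i + n) = B i)
    (hAsym : ∀ i, (A i)ᵀ = A i) (hBinv : ∀ i, IsUnit (B i).det)
    (ρ : ℂ) (hρ : ρ ≠ 0) :
    ρ ^ (-(m : ℤ)) * ((monodromy m n A B).map (Complex.ofReal) - ρ • 1).det
      = (-1 : ℂ) ^ m * (rhoHessian m n A B ρ).det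
          / ∏ i : Fin n, ((B ((i : ℕ) : ℤ)).det : ℂ) := by
  obtain ⟨N, rfl⟩ : ∃ N, n = N + 1 := Nat.exists_eq_succ_of_ne_zero (NeZero.ne n)
  let T : ℕ → Matrix (Fin m ⊕ Fin m) (Fin m ⊕ Fin m) ℂ := fun i =>
    (transferMatrix m A B (i : ℤ)).map Complex.ofReal
  have hdetC : ∀ M : Matrix (Fin m) (Fin m) ℝ, (M.map Complex.ofReal).det = (M.det : ℂ) := fun M =>
    (Complex.ofRealHom.map_det M).symm
  have hmulC : ∀ M K : Matrix (Fin m) (Fin m) ℝ,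
      (M * K).map Complex.ofReal = M.map Complex.ofReal * K.map Complex.ofReal := fun M K =>
    Matrix.map_mul (f := Complex.ofRealHom)
  have hunit : ∀ i, IsUnit ((B i)ᵀ).det := fun i => by rw [Matrix.det_transpose]; exact hBinv i
  have hcore := hill_core N m ρ hρ (fun i => (A i).map Complex.ofReal)
    (fun i => (B ((i : ℤ) - 1)).map Complex.ofReal) (fun i => ((B i)ᵀ).map Complex.ofReal)
    (fun i => (((B i)ᵀ)⁻¹).map Complex.ofReal) (fun i => by
      rw [← hmulC, Matrix.nonsing_inv_mul _ (hunit i)]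
      simp)
  have hT : (fun i : ℕ => Matrix.fromBlocks 0 1
      (-((((B i)ᵀ)⁻¹).map Complex.ofReal * (B ((i : ℤ) - 1)).map Complex.ofReal))
      ((((B i)ᵀ)⁻¹).map Complex.ofReal * (A i).map Complex.ofReal)) = T := by
    funext i
    simp only [T, transferMatrix, ← hmulC]
    ext p q
    rcases p with p | p <;> rcases q with q | q <;>
      by_cases hpq : p = q <;> simp [Matrix.one_apply, hpq]
  rw [hT] at hcore
  have hH : hillFlat (Matrix.diagonal (fun i : Fin (N + 1) => (A (i : ℕ)).map Complex.ofReal)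
      - Matrix.diagonal (fun i : Fin (N + 1) => (B (((i : ℕ) : ℤ) - 1)).map Complex.ofReal) *
        hillShiftInv N (Fin m) ρ
      - Matrix.diagonal (fun i : Fin (N + 1) => ((B (i : ℕ))ᵀ).map Complex.ofReal) *
        hillShift N (Fin m) ρ) = rhoHessian m (N + 1) A B ρ := by
    ext ⟨i, x⟩ ⟨j, y⟩
    have hl : (i = Fin.last N) ↔ ((i : ℕ) = N + 1 - 1) := Fin.ext_iff
    have hz : (i = 0) ↔ ((i : ℕ) = 0) := Fin.ext_iff
    simp only [hillFlat, rhoHessian, hillShift, hillShiftInv, Matrix.of_apply, Matrix.sub_apply,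
      Matrix.diagonal_mul, hl, hz, Matrix.diagonal_apply]
    rw [sub_eq_add_neg, sub_eq_add_neg]
    congr 1
    · congr 1
      · by_cases hij : i = j
        · subst hij; simp
        · rw [if_neg hij, if_neg (Ne.symm hij)]; rfl
      · split_ifs <;> simp
    · split_ifs <;> simp
  rw [hH] at hcore
  have hcyc : (ρ • 1 - (monodromy m (N + 1) A B).map Complex.ofReal).det =
      (ρ • 1 - hillProd T (N + 1)).det := by
    have h1 : (monodromy m (N + 1) A B).map Complex.ofReal =
        T 0 * hillProd (fun i => T (i + 1)) N := by
      have hTN : (fun i : ℕ => (transferMatrix m A B ((i : ℤ) + 1)).map Complex.ofReal) =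
          fun i => T (i + 1) := by
        funext i; simp [T]
      rw [hill_monodromy, hTN, hillProd]
      congr 1
      have ha := hAper 0
      have hb := hBper 0
      have hb' := hBper (-1)
      rw [zero_add] at ha hb
      have hb2 : B (((N + 1 : ℕ) : ℤ) - 1) = B (((0 : ℕ) : ℤ) - 1) := by
        rw [show ((N + 1 : ℕ) : ℤ) - 1 = -1 + ((N + 1 : ℕ) : ℤ) by ring, hb']; rfl
      simp only [T, transferMatrix]
      rw [hb2, ha, hb]
      rfl
    rw [h1, hillProd_succ']
    have h2 := congrArg (Polynomial.eval ρ)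
      (Matrix.charpoly_mul_comm (T 0) (hillProd (fun i => T (i + 1)) N))
    rw [Matrix.eval_charpoly, Matrix.eval_charpoly] at h2
    have h3 : Matrix.scalar (Fin m ⊕ Fin m) ρ = ρ • 1 := by
      ext p q; simp [Matrix.one_apply, Matrix.diagonal_apply]
    rwa [h3] at h2
  have hneg : ((monodromy m (N + 1) A B).map (Complex.ofReal) - ρ • 1).det =
      (ρ • 1 - (monodromy m (N + 1) A B).map Complex.ofReal).det := by
    rw [← neg_sub, Matrix.det_neg]
    simp [← two_mul, pow_mul]
  have hprod : ∏ i : Fin (N + 1), ((((B ((i : ℕ) : ℤ))ᵀ)⁻¹).map Complex.ofReal).det =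
      (∏ i : Fin (N + 1), ((B ((i : ℕ) : ℤ)).det : ℂ))⁻¹ := by
    rw [← Finset.prod_inv_distrib]
    refine Finset.prod_congr rfl fun i _ => ?_
    rw [hdetC, Matrix.det_nonsing_inv, Matrix.det_transpose, Ring.inverse_eq_inv']
    simp
  rw [hprod] at hcore
  rw [hneg, hcyc, ← hcore, _root_.zpow_neg, zpow_natCast]
  field_simp
end

section
/- Instability criterion: for a periodic linear discrete Lagrangian system, if the Hessian H is invertible and σ · (−1)^{m + ind(H)} < 0, where σ = sign(∏_{i=1}^n det B_i), then the monodromy matrix P has a real eigenvalue ρ > 1. -/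
open Matrix BigOperators

/-- The Hessian of the action (cyclic conventions). -/
noncomputable def hessian (m n : ℕ) [NeZero n] (A B : ℤ → Matrix (Fin m) (Fin m) ℝ) :
    Matrix (Fin n × Fin m) (Fin n × Fin m) ℝ :=
  fun p q =>
    (if q.1 = p.1 then A ((p.1 : ℕ) : ℤ) p.2 q.2 else 0)
    + (if q.1 = p.1 - 1 then -(B (((p.1 : ℕ) : ℤ) - 1) p.2 q.2) else 0)
    + (if q.1 = p.1 + 1 then -(B ((p.1 : ℕ) : ℤ) q.2 p.2) else 0)

/-- The (Morse) index of a real symmetric matrix: the number of its negative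
eigenvalues counted with multiplicity, equivalently the maximal dimension of a
subspace on which the associated quadratic form is negative definite. -/
noncomputable def matIndex {N : Type*} [Fintype N] (Q : Matrix N N ℝ) : ℕ :=
  sSup {d : ℕ | ∃ W : Submodule ℝ (N → ℝ), Module.finrank ℝ W = d ∧
    ∀ x ∈ W, x ≠ 0 → x ⬝ᵥ Q *ᵥ x < 0}

lemma matIndex_eq {N : Type*} [Fintype N] [DecidableEq N] (Q : Matrix N N ℝ)
    (hQ : Q.IsHermitian) : matIndex Q = {i | hQ.eigenvalues i < 0}.ncard := by
  have happ : ∀ x, Q.toQuadraticForm' x = x ⬝ᵥ Q *ᵥ x := by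
    intro x
    simp [Matrix.toQuadraticForm', Matrix.toLinearMap₂'_apply']
  have h1 : matIndex Q = sigNeg Q.toQuadraticForm' := by
    unfold matIndex
    rw [← (sigNeg_isGreatest Q.toQuadraticForm').csSup_eq]
    congr 1
    ext d
    simp only [Set.mem_ofPred_eq]
    refine exists_congr fun W => and_congr_right fun _ => ?_
    constructor
    · intro h x hx
      have := h x.1 x.2 (by simpa using hx)
      simp [QuadraticMap.restrict_apply, happ]
      exact this
    · intro h x hx hx0
      have := h ⟨x, hx⟩ (by simpa using hx0)
      simp [QuadraticMap.restrict_apply, happ] at this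
      exact this
  rw [h1]
  apply QuadraticForm.sigNeg_of_equiv_weightedSumSquares
  let U : Matrix N N ℝ := hQ.eigenvectorUnitary
  have hU1 : U * star U = 1 := Unitary.coe_mul_star_self hQ.eigenvectorUnitary
  have hU2 : star U * U = 1 := Unitary.coe_star_mul_self hQ.eigenvectorUnitary
  have hsp : Q = U * diagonal hQ.eigenvalues * star U := by
    have := hQ.spectral_theorem
    rw [Unitary.conjStarAlgAut_apply] at this
    exact this
  refine ⟨⟨Matrix.toLin'OfInv hU1 hU2, ?_⟩⟩
  intro x
  have hx : Matrix.toLin'OfInv hU1 hU2 x = star U *ᵥ x := rfl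
  change QuadraticMap.weightedSumSquares ℝ hQ.eigenvalues (Matrix.toLin'OfInv hU1 hU2 x) = _
  rw [hx, happ]
  conv_rhs => rw [hsp, ← mulVec_mulVec, ← mulVec_mulVec, dotProduct_mulVec, ← mulVec_transpose]
  simp only [QuadraticMap.weightedSumSquares_apply, dotProduct, mulVec_diagonal, smul_eq_mul]
  refine Finset.sum_congr rfl fun i _ => ?_
  have : star U = Uᵀ := by ext; simp [star]
  rw [this]; ring

lemma det_sign {N : Type*} [Fintype N] [DecidableEq N] (Q : Matrix N N ℝ)
    (hQ : Q.IsHermitian) (hdet : Q.det ≠ 0) : 0 < Q.det * (-1) ^ matIndex Q := by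
  classical
  rw [matIndex_eq Q hQ]
  rw [hQ.det_eq_prod_eigenvalues] at hdet ⊢
  simp only [RCLike.ofReal_real_eq_id, id] at hdet ⊢
  have hne : ∀ i, hQ.eigenvalues i ≠ 0 := fun i => (Finset.prod_ne_zero_iff.1 hdet) i (Finset.mem_univ i)
  have : (-1 : ℝ) ^ {i | hQ.eigenvalues i < 0}.ncard =
      ∏ i, if hQ.eigenvalues i < 0 then (-1 : ℝ) else 1 := by
    rw [Finset.prod_ite]
    simp [Set.ncard_eq_toFinset_card']
  rw [this, ← Finset.prod_mul_distrib]
  apply Finset.prod_pos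
  intro i _
  split_ifs with h
  · linarith
  · have := lt_of_le_of_ne (not_lt.1 h) (hne i).symm
    linarith

lemma exists_root {N : Type*} [Fintype N] [DecidableEq N] [Nonempty N] (P : Matrix N N ℝ)
    (hev : Even (Fintype.card N)) (h : (P - 1).det < 0) :
    ∃ ρ : ℝ, 1 < ρ ∧ (P - ρ • 1).det = 0 := by
  have key : ∀ ρ : ℝ, P.charpoly.eval ρ = (P - ρ • 1).det := by
    intro ρ
    rw [Matrix.eval_charpoly, ← neg_sub, Matrix.det_neg, hev.neg_one_pow, one_mul,
      Matrix.smul_one_eq_diagonal]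
    rfl
  have ht : Filter.Tendsto (fun x => P.charpoly.eval x) Filter.atTop Filter.atTop := by
    apply Polynomial.tendsto_atTop_of_leadingCoeff_nonneg
    · rw [Matrix.charpoly_degree_eq_dim]
      exact_mod_cast Fintype.card_pos
    · rw [(Matrix.charpoly_monic P).leadingCoeff]; norm_num
  obtain ⟨b, hb, hb1⟩ := ((ht.eventually_gt_atTop 0).and (Filter.eventually_gt_atTop 1)).exists
  have h1 : P.charpoly.eval 1 < 0 := by rw [key]; simpa using h
  obtain ⟨c, hc, hc0⟩ := intermediate_value_Ioo hb1.le
    (P.charpoly.continuous.continuousOn) ⟨h1, hb⟩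
  exact ⟨c, hc.1, by rw [← key]; exact hc0⟩

lemma per_modEq {α : Type*} {f : ℤ → α} {n : ℕ} (hf : ∀ i, f (i + n) = f i) {a b : ℤ}
    (h : a ≡ b [ZMOD n]) : f a = f b := by
  obtain ⟨c, hc⟩ := h.dvd
  have hp : Function.Periodic f (n : ℤ) := hf
  have := hp.int_mul c a
  rw [← this]
  congr 1
  simp only [Int.cast_id]
  linarith

lemma fin_add_one_modEq {n : ℕ} [NeZero n] (p : Fin n) :
    (((p + 1 : Fin n) : ℕ) : ℤ) ≡ (p : ℕ) + 1 [ZMOD n] := by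
  have : ((p + 1 : Fin n) : ℕ) ≡ (p : ℕ) + 1 [MOD n] := by
    unfold Nat.ModEq
    simp [Fin.val_add]
  exact_mod_cast (Int.natCast_modEq_iff.2 this)

lemma hessian_symm (m n : ℕ) [NeZero n]
    (A B : ℤ → Matrix (Fin m) (Fin m) ℝ) (hBper : ∀ i, B (i + n) = B i)
    (hAsym : ∀ i, (A i)ᵀ = A i) : (hessian m n A B).IsHermitian := by
  have hB : ∀ p : Fin n, B ((((p + 1 : Fin n) : ℕ) : ℤ) - 1) = B ((p : ℕ) : ℤ) := by
    intro p
    apply per_modEq hBper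
    have := (fin_add_one_modEq p).sub_right 1
    simpa using this
  have key : ∀ p q : Fin n × Fin m,
      (if q.1 = p.1 - 1 then -(B (((p.1 : ℕ) : ℤ) - 1) p.2 q.2) else 0) =
      (if p.1 = q.1 + 1 then -(B ((q.1 : ℕ) : ℤ) p.2 q.2) else 0) := by
    intro p q
    by_cases h : p.1 = q.1 + 1
    · rw [if_pos h, if_pos (by rw [h]; simp), h, hB]
    · rw [if_neg h, if_neg]
      intro h'; apply h; rw [h']; simp
  ext p q
  simp only [conjTranspose_apply, star_trivial, hessian]
  rw [key p q, key q p]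
  have : (if q.1 = p.1 then A ((p.1 : ℕ) : ℤ) p.2 q.2 else 0) =
      (if p.1 = q.1 then A ((q.1 : ℕ) : ℤ) q.2 p.2 else 0) := by
    by_cases h : q.1 = p.1
    · rw [if_pos h, if_pos h.symm, h]
      conv_lhs => rw [← hAsym]
      rfl
    · rw [if_neg h, if_neg (Ne.symm h)]
  rw [this]; ring

lemma monodromy_succ (m n : ℕ) (A B : ℤ → Matrix (Fin m) (Fin m) ℝ) :
    monodromy m (n + 1) A B = transferMatrix m A B ((n : ℤ) + 1) * monodromy m n A B := by
  simp [monodromy, List.range_succ]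

/-- The fundamental solution of the recursion. -/
noncomputable def fundSol (m : ℕ) (A B : ℤ → Matrix (Fin m) (Fin m) ℝ) (j : ℕ) :
    Matrix (Fin m) (Fin m ⊕ Fin m) ℝ := fun a c => monodromy m j A B (Sum.inl a) c

lemma monodromy_inr (m j : ℕ) (A B : ℤ → Matrix (Fin m) (Fin m) ℝ) (a : Fin m)
    (c : Fin m ⊕ Fin m) :
    monodromy m j A B (Sum.inr a) c = fundSol m A B (j + 1) a c := by
  simp [fundSol, monodromy_succ, transferMatrix, Matrix.mul_apply, Matrix.one_apply]

lemma fundSol_rec (m j : ℕ) (A B : ℤ → Matrix (Fin m) (Fin m) ℝ)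
    (hBinv : ∀ i, IsUnit (B i).det) :
    (B ((j : ℤ) + 1))ᵀ * fundSol m A B (j + 2) =
      A ((j : ℤ) + 1) * fundSol m A B (j + 1) - B (j : ℤ) * fundSol m A B j := by
  have h : fundSol m A B (j + 2) = ((B ((j : ℤ) + 1))ᵀ)⁻¹ *
      (A ((j : ℤ) + 1) * fundSol m A B (j + 1) - B (j : ℤ) * fundSol m A B j) := by
    ext a c
    rw [← monodromy_inr m (j + 1), monodromy_succ, Matrix.mul_sub, ← Matrix.mul_assoc,
      ← Matrix.mul_assoc]
    simp only [transferMatrix, Matrix.mul_apply (M := fromBlocks _ _ _ _), Fintype.sum_sum_type,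
      fromBlocks_apply₂₁, fromBlocks_apply₂₂, monodromy_inr, add_sub_cancel_right]
    simp only [Matrix.sub_apply, Matrix.mul_apply (N := fundSol _ _ _ _), Matrix.neg_apply,
      neg_mul, Finset.sum_neg_distrib]
    simp only [fundSol]
    ring
  rw [h, ← Matrix.mul_assoc, Matrix.mul_nonsing_inv, Matrix.one_mul]
  rw [det_transpose]; exact hBinv _

lemma fundSol_zero (m : ℕ) (A B : ℤ → Matrix (Fin m) (Fin m) ℝ) :
    fundSol m A B 0 = Matrix.fromCols 1 0 := by
  ext a (c | c) <;> simp [fundSol, monodromy, Matrix.one_apply]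

lemma fundSol_one (m : ℕ) (A B : ℤ → Matrix (Fin m) (Fin m) ℝ) :
    fundSol m A B 1 = Matrix.fromCols 0 1 := by
  ext a (c | c) <;> simp [← monodromy_inr, monodromy, Matrix.one_apply]

lemma det_hessian_one (m : ℕ) (A B : ℤ → Matrix (Fin m) (Fin m) ℝ)
    (hAper : ∀ i, A (i + (1 : ℕ)) = A i) (hBper : ∀ i, B (i + (1 : ℕ)) = B i)
    (hBinv : ∀ i, IsUnit (B i).det) :
    (hessian m 1 A B).det = (-1) ^ m * (∏ i : Fin 1, (B ((i : ℕ) : ℤ)).det) *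
      (monodromy m 1 A B - 1).det := by
  have hB : ∀ i, B i = B 0 := fun i => per_modEq hBper (by simp [Int.modEq_one])
  have hA : ∀ i, A i = A 0 := fun i => per_modEq hAper (by simp [Int.modEq_one])
  have h1 : (hessian m 1 A B).det = (A 0 - B 0 - (B 0)ᵀ).det := by
    rw [← Matrix.det_submatrix_equiv_self (Equiv.uniqueProd (Fin m) (Fin 1)).symm]
    congr 1
    ext a b
    simp [hessian, hB (-1), sub_eq_add_neg]
  have h2 : monodromy m 1 A B - 1 = fromBlocks (-1) 1 (-(((B 0)ᵀ)⁻¹ * B 0))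
      (((B 0)ᵀ)⁻¹ * A 0 - 1) := by
    rw [monodromy_succ]
    simp only [transferMatrix, hB (_ + 1), hB (_ - 1), hA (_ + 1)]
    rw [← fromBlocks_one]
    simp [monodromy, sub_eq_add_neg, fromBlocks_add, fromBlocks_neg, -fromBlocks_one]
  have hu : IsUnit ((B 0)ᵀ).det := by rw [det_transpose]; exact hBinv 0
  rw [h1, h2]
  have h3 : (A 0 - B 0 - (B 0)ᵀ) = (B 0)ᵀ * (((B 0)ᵀ)⁻¹ * A 0 - 1 - ((B 0)ᵀ)⁻¹ * B 0) := by
    simp only [Matrix.mul_sub, ← Matrix.mul_assoc, Matrix.mul_nonsing_inv _ hu, Matrix.one_mul,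
      Matrix.mul_one]
    abel
  have h4 : fromBlocks (-1) (1 : Matrix (Fin m) (Fin m) ℝ) (-(((B 0)ᵀ)⁻¹ * B 0)) (((B 0)ᵀ)⁻¹ * A 0 - 1) =
      fromBlocks (-1) (0 : Matrix (Fin m) (Fin m) ℝ) (-(((B 0)ᵀ)⁻¹ * B 0)) (((B 0)ᵀ)⁻¹ * A 0 - 1 - ((B 0)ᵀ)⁻¹ * B 0) *
      fromBlocks 1 (-1) 0 (1 : Matrix (Fin m) (Fin m) ℝ) := by
    simp [fromBlocks_multiply]
  rw [h4, Matrix.det_mul, det_fromBlocks_zero₁₂, det_fromBlocks_zero₂₁, h3, Matrix.det_mul]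
  simp only [det_neg, det_one, det_transpose, Fintype.card_fin, Finset.univ_unique, Finset.prod_singleton]
  have : ((-1 : ℝ) ^ m) * (-1) ^ m = 1 := by rw [← mul_pow]; simp
  simp
  linear_combination (-(B 0).det * (((B 0)ᵀ)⁻¹ * A 0 - 1 - ((B 0)ᵀ)⁻¹ * B 0).det) * this

/-- The (block lower triangular) open chain matrix. -/
noncomputable def chainMat (m k : ℕ) (A B : ℤ → Matrix (Fin m) (Fin m) ℝ) :
    Matrix (Fin (k + 2) × Fin m) (Fin (k + 2) × Fin m) ℝ :=
  fun p q =>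
    (if (q.1 : ℕ) + 1 = p.1 then A (((p.1 : ℕ) : ℤ) + 1) p.2 q.2 else 0)
    + (if (q.1 : ℕ) + 2 = p.1 then -(B ((p.1 : ℕ) : ℤ) p.2 q.2) else 0)
    + (if q.1 = p.1 then -(B (((p.1 : ℕ) : ℤ) + 1) q.2 p.2) else 0)

/-- The coupling of the initial data to the equations. -/
noncomputable def inMat (m k : ℕ) (A B : ℤ → Matrix (Fin m) (Fin m) ℝ) :
    Matrix (Fin (k + 2) × Fin m) (Fin m ⊕ Fin m) ℝ :=
  fun p c =>
    (if (p.1 : ℕ) = 0 then (A 1 * fundSol m A B 1 - B 0 * fundSol m A B 0) p.2 c else 0)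
    + (if (p.1 : ℕ) = 1 then -(B 1 * fundSol m A B 1) p.2 c else 0)

/-- Extraction of the last two entries. -/
noncomputable def outMat (m k : ℕ) :
    Matrix (Fin m ⊕ Fin m) (Fin (k + 2) × Fin m) ℝ :=
  fun c q => Sum.elim (fun a => if (q.1 : ℕ) = k ∧ q.2 = a then 1 else 0)
    (fun a => if (q.1 : ℕ) = k + 1 ∧ q.2 = a then 1 else 0) c

/-- The solution matrix. -/
noncomputable def solMat (m k : ℕ) (A B : ℤ → Matrix (Fin m) (Fin m) ℝ) :
    Matrix (Fin (k + 2) × Fin m) (Fin m ⊕ Fin m) ℝ :=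
  fun p c => fundSol m A B (p.1 + 2) p.2 c

lemma sum_fin_ite (n : ℕ) (j : ℕ) (P : Prop) [Decidable P] (g : ℕ → ℝ)
    (s : ℕ → Prop) [DecidablePred s]
    (hs : ∀ i, i < n → (s i ↔ (i = j ∧ P))) (hj : P → j < n) :
    (∑ i : Fin n, if s i then g i else 0) = if P then g j else 0 := by
  by_cases hP : P
  · rw [if_pos hP, Finset.sum_eq_single (⟨j, hj hP⟩ : Fin n)]
    · rw [if_pos]; exact (hs j (hj hP)).2 ⟨rfl, hP⟩
    · intro b _ hb
      rw [if_neg]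
      intro h
      exact hb (Fin.ext ((hs b b.2).1 h).1)
    · simp
  · rw [if_neg hP]
    apply Finset.sum_eq_zero
    intro b _
    rw [if_neg]
    intro h
    exact hP ((hs b b.2).1 h).2

lemma out_mul_sol (m k : ℕ) (A B : ℤ → Matrix (Fin m) (Fin m) ℝ) :
    outMat m k * solMat m k A B = monodromy m (k + 2) A B := by
  ext (a | a) c
  · simp only [Matrix.mul_apply, Fintype.sum_prod_type, outMat, solMat, Sum.elim_inl, ite_and,
      ite_mul, one_mul, zero_mul]
    have : ∀ x : Fin (k + 2), (∑ y, if (x : ℕ) = k then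
        (if y = a then fundSol m A B (x + 2) y c else 0) else 0) =
        if (x : ℕ) = k then fundSol m A B (x + 2) a c else 0 := by
      intro x
      split_ifs <;> simp
    simp only [this]
    rw [sum_fin_ite (k + 2) k True (fun x => fundSol m A B (x + 2) a c) (fun x => x = k)
      (by simp) (by intro; omega)]
    simp [fundSol]
  · simp only [Matrix.mul_apply, Fintype.sum_prod_type, outMat, solMat, Sum.elim_inr, ite_and,
      ite_mul, one_mul, zero_mul]
    have : ∀ x : Fin (k + 2), (∑ y, if (x : ℕ) = k + 1 then
        (if y = a then fundSol m A B (x + 2) y c else 0) else 0) =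
        if (x : ℕ) = k + 1 then fundSol m A B (x + 2) a c else 0 := by
      intro x
      split_ifs <;> simp
    simp only [this]
    rw [sum_fin_ite (k + 2) (k + 1) True (fun x => fundSol m A B (x + 2) a c) (fun x => x = k + 1)
      (by simp) (by intro; omega)]
    simp [monodromy_inr]

lemma chain_mul_sol (m k : ℕ) (A B : ℤ → Matrix (Fin m) (Fin m) ℝ)
    (hBinv : ∀ i, IsUnit (B i).det) :
    chainMat m k A B * solMat m k A B = - inMat m k A B := by
  ext ⟨i, a⟩ c
  have hrec := congrFun (congrFun (fundSol_rec m i A B hBinv) a) c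
  have h1 : (chainMat m k A B * solMat m k A B) (i, a) c =
      (if 1 ≤ (i : ℕ) then (A ((i : ℕ) + 1 : ℤ) * fundSol m A B (i + 1)) a c else 0)
      + (if 2 ≤ (i : ℕ) then -(B ((i : ℕ) : ℤ) * fundSol m A B i) a c else 0)
      - ((B ((i : ℕ) + 1 : ℤ))ᵀ * fundSol m A B (i + 2)) a c := by
    simp only [Matrix.mul_apply (M := chainMat _ _ _ _), Fintype.sum_prod_type, chainMat, solMat,
      add_mul, Finset.sum_add_distrib, ite_mul, zero_mul, sub_eq_add_neg]
    congr 1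
    · congr 1
      · have : ∀ x : Fin (k + 2), (∑ y, if (x : ℕ) + 1 = i then
            A ((i : ℕ) + 1 : ℤ) a y * fundSol m A B (x + 2) y c else 0) =
            if (x : ℕ) + 1 = i then (A ((i : ℕ) + 1 : ℤ) * fundSol m A B (x + 2)) a c else 0 := by
          intro x
          split_ifs <;> simp [Matrix.mul_apply]
        simp only [this]
        rw [sum_fin_ite (k + 2) (i - 1) (1 ≤ (i : ℕ))
          (fun x => (A ((i : ℕ) + 1 : ℤ) * fundSol m A B (x + 2)) a c) (fun x => x + 1 = i)
          (by intros; omega) (by intros; omega)]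
        refine if_ctx_congr Iff.rfl (fun h => ?_) (fun _ => rfl)
        rw [show (i : ℕ) - 1 + 2 = i + 1 by omega]
      · have : ∀ x : Fin (k + 2), (∑ y, if (x : ℕ) + 2 = i then
            -B ((i : ℕ) : ℤ) a y * fundSol m A B (x + 2) y c else 0) =
            if (x : ℕ) + 2 = i then -(B ((i : ℕ) : ℤ) * fundSol m A B (x + 2)) a c else 0 := by
          intro x
          split_ifs <;> simp [Matrix.mul_apply]
        simp only [this]
        rw [sum_fin_ite (k + 2) (i - 2) (2 ≤ (i : ℕ))
          (fun x => -(B ((i : ℕ) : ℤ) * fundSol m A B (x + 2)) a c) (fun x => x + 2 = i)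
          (by intros; omega) (by intros; omega)]
        refine if_ctx_congr Iff.rfl (fun h => ?_) (fun _ => rfl)
        rw [show (i : ℕ) - 2 + 2 = i by omega]
    · rw [Finset.sum_eq_single i]
      · simp [Matrix.mul_apply]
      · intro b _ hb
        simp [hb]
      · simp
  rw [h1, hrec]
  simp only [inMat, Matrix.neg_apply, Matrix.sub_apply]
  rcases Nat.lt_or_ge (i : ℕ) 2 with h | h
  · have : (i : ℕ) = 0 ∨ (i : ℕ) = 1 := by omega
    rcases this with h | h <;> simp [h]
  · rw [if_pos (by omega), if_pos h, if_neg (by omega), if_neg (by omega)]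
    ring

lemma in_mul_out (m k : ℕ) (A B : ℤ → Matrix (Fin m) (Fin m) ℝ) (p q : Fin (k + 2) × Fin m) :
    (inMat m k A B * outMat m k) p q =
      (if (q.1 : ℕ) = k then inMat m k A B p (Sum.inl q.2) else 0)
      + (if (q.1 : ℕ) = k + 1 then inMat m k A B p (Sum.inr q.2) else 0) := by
  simp only [Matrix.mul_apply, Fintype.sum_sum_type, outMat, Sum.elim_inl, Sum.elim_inr]
  congr 1 <;> split_ifs with h <;> simp [h]

lemma det_chain (m k : ℕ) (A B : ℤ → Matrix (Fin m) (Fin m) ℝ) :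
    (chainMat m k A B).det = ∏ i : Fin (k + 2), (-1) ^ m * (B (((i : ℕ) : ℤ) + 1)).det := by
  have hbt : (chainMat m k A B).BlockTriangular (fun p => OrderDual.toDual p.1) := by
    intro p q h
    have h' : p.1 < q.1 := h
    have h'' : (p.1 : ℕ) < q.1 := h'
    simp only [chainMat]
    rw [if_neg (by omega), if_neg (by omega), if_neg (ne_of_gt h')]
    simp
  rw [hbt.det_fintype]
  refine Fintype.prod_equiv OrderDual.ofDual _ _ fun i => ?_
  let e : Fin m ≃ {p : Fin (k + 2) × Fin m // OrderDual.toDual p.1 = i} :=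
    { toFun := fun a => ⟨(OrderDual.ofDual i, a), rfl⟩
      invFun := fun p => p.1.2
      left_inv := fun a => rfl
      right_inv := by
        rintro ⟨⟨x, a⟩, h⟩
        subst h
        rfl }
  rw [← Matrix.det_submatrix_equiv_self e]
  have : ((chainMat m k A B).toSquareBlock (fun p => OrderDual.toDual p.1) i).submatrix e e =
      -(B (((OrderDual.ofDual i : Fin (k + 2)) : ℕ) + 1 : ℤ))ᵀ := by
    ext a b
    simp [e, chainMat, Matrix.toSquareBlock, Matrix.toSquareBlockProp]
  rw [this, det_neg, det_transpose, Fintype.card_fin]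

lemma shifted_hessian (m k : ℕ) (A B : ℤ → Matrix (Fin m) (Fin m) ℝ)
    (hAper : ∀ i, A (i + (k + 2 : ℕ)) = A i) (hBper : ∀ i, B (i + (k + 2 : ℕ)) = B i)
    (p q : Fin (k + 2) × Fin m) :
    hessian m (k + 2) A B (p.1 + 1, p.2) (q.1 + 1 + 1, q.2) =
      (chainMat m k A B + inMat m k A B * outMat m k) p q := by
  obtain ⟨i, a⟩ := p
  obtain ⟨j, b⟩ := q
  have hA1 : A (((i + 1 : Fin (k + 2)) : ℕ) : ℤ) = A ((i : ℕ) + 1) :=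
    per_modEq hAper (fin_add_one_modEq i)
  have hB1 : B (((i + 1 : Fin (k + 2)) : ℕ) : ℤ) = B ((i : ℕ) + 1) :=
    per_modEq hBper (fin_add_one_modEq i)
  have hB2 : B ((((i + 1 : Fin (k + 2)) : ℕ) : ℤ) - 1) = B (i : ℕ) := by
    apply per_modEq hBper
    have := (fin_add_one_modEq i).sub_right 1
    simpa using this
  have e1 : (j + 1 + 1 = i + 1) ↔ ((j : ℕ) + 1 = i ∨ ((j : ℕ) = k + 1 ∧ (i : ℕ) = 0)) := by
    rw [add_left_inj, Fin.ext_iff, Fin.val_add_one]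
    split_ifs with h
    · rw [Fin.ext_iff, Fin.val_last] at h; omega
    · rw [Fin.ext_iff, Fin.val_last] at h; omega
  have e2 : (j + 1 + 1 = i + 1 - 1) ↔ ((j : ℕ) + 2 = i ∨ ((j : ℕ) = k ∧ (i : ℕ) = 0) ∨
      ((j : ℕ) = k + 1 ∧ (i : ℕ) = 1)) := by
    rw [add_sub_cancel_right, Fin.ext_iff, Fin.val_add_one]
    split_ifs with h
    · rw [Fin.ext_iff, Fin.val_last, Fin.val_add_one] at h
      split_ifs at h with h'
      rw [Fin.ext_iff, Fin.val_last] at h'; omega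
    · rw [Fin.ext_iff, Fin.val_last, Fin.val_add_one] at h
      rw [Fin.val_add_one]
      split_ifs at h ⊢ with h' <;> rw [Fin.ext_iff, Fin.val_last] at h' <;> omega
  have e3 : (j + 1 + 1 = i + 1 + 1) ↔ j = i := by simp
  rw [Matrix.add_apply, in_mul_out]
  simp only [hessian, hA1, hB1, hB2, e1, e2, e3, chainMat, inMat, fundSol_zero, fundSol_one,
    Matrix.mul_fromCols, Matrix.sub_apply, Matrix.mul_zero, Matrix.mul_one,
    Matrix.fromCols_apply_inl, Matrix.fromCols_apply_inr, Matrix.zero_apply]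
  have hi := i.2
  have hj := j.2
  by_cases hi0 : (i : ℕ) = 0
  · simp only [hi0]
    by_cases hjk : (j : ℕ) = k
    · simp [hjk]; try ring
    · by_cases hjk1 : (j : ℕ) = k + 1
      · simp [hjk1]; try ring
      · simp [hjk, hjk1]
  · by_cases hi1 : (i : ℕ) = 1
    · simp only [hi1]
      by_cases hjk1 : (j : ℕ) = k + 1
      · simp [hjk1]; try ring
      · simp [hjk1]
    · simp [hi0, hi1]

lemma det_hessian_big (m k : ℕ) (A B : ℤ → Matrix (Fin m) (Fin m) ℝ)
    (hAper : ∀ i, A (i + (k + 2 : ℕ)) = A i) (hBper : ∀ i, B (i + (k + 2 : ℕ)) = B i)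
    (hBinv : ∀ i, IsUnit (B i).det) :
    (hessian m (k + 2) A B).det = (-1) ^ m * (∏ i : Fin (k + 2), (B ((i : ℕ) : ℤ)).det) *
      (monodromy m (k + 2) A B - 1).det := by
  let σ : Equiv.Perm (Fin (k + 2) × Fin m) := Equiv.prodCongrLeft fun _ => finRotate (k + 2)
  have hσ : ∀ p, σ p = (p.1 + 1, p.2) := by
    rintro ⟨i, a⟩
    simp [σ, Equiv.prodCongrLeft]
  have hsign : ((Equiv.Perm.sign σ : ℤ) : ℝ) = (-1) ^ ((k + 1) * m) := by
    simp [σ, Equiv.Perm.sign_prodCongrLeft, sign_finRotate, pow_mul]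
  have h1 : ((hessian m (k + 2) A B).submatrix σ σ).submatrix id σ =
      chainMat m k A B * (1 - solMat m k A B * outMat m k) := by
    rw [Matrix.mul_sub, ← Matrix.mul_assoc, chain_mul_sol m k A B hBinv, Matrix.mul_one,
      Matrix.neg_mul, sub_neg_eq_add]
    ext p q
    rw [← shifted_hessian m k A B hAper hBper]
    simp [hσ]
  have h2 := congrArg Matrix.det h1
  rw [Matrix.det_permute', Matrix.det_submatrix_equiv_self, Matrix.det_mul,
    Matrix.det_one_sub_mul_comm, out_mul_sol, det_chain, hsign, Finset.prod_mul_distrib,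
    Finset.prod_const, Finset.card_univ, Fintype.card_fin] at h2
  have h3 : ∏ i : Fin (k + 2), (B (((i : ℕ) : ℤ) + 1)).det =
      ∏ i : Fin (k + 2), (B ((i : ℕ) : ℤ)).det := by
    rw [← Equiv.prod_comp (finRotate (k + 2)) (fun i : Fin (k + 2) => (B ((i : ℕ) : ℤ)).det)]
    refine Finset.prod_congr rfl fun i _ => ?_
    rw [finRotate_apply, per_modEq hBper (fin_add_one_modEq i)]
  have h4 : (1 - monodromy m (k + 2) A B).det = (monodromy m (k + 2) A B - 1).det := by
    rw [← neg_sub, det_neg]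
    simp [Fintype.card_sum]
  rw [h3, h4] at h2
  have h5 : ((-1 : ℝ) ^ ((k + 1) * m)) * (-1) ^ ((k + 1) * m) = 1 := by rw [← mul_pow]; simp
  have h6 : (((-1 : ℝ) ^ m) ^ (k + 2)) = (-1) ^ ((k + 1) * m) * (-1) ^ m := by ring
  rw [h6] at h2
  generalize (-1 : ℝ) ^ ((k + 1) * m) = s at *
  linear_combination s * h2 - ((hessian m (k + 2) A B).det -
    (-1) ^ m * (∏ i : Fin (k + 2), (B ((i : ℕ) : ℤ)).det) *
      (monodromy m (k + 2) A B - 1).det) * h5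

lemma det_hessian (m n : ℕ) [NeZero n] (A B : ℤ → Matrix (Fin m) (Fin m) ℝ)
    (hAper : ∀ i, A (i + n) = A i) (hBper : ∀ i, B (i + n) = B i)
    (hBinv : ∀ i, IsUnit (B i).det) :
    (hessian m n A B).det = (-1) ^ m * (∏ i : Fin n, (B ((i : ℕ) : ℤ)).det) *
      (monodromy m n A B - 1).det := by
  rename_i hn
  rcases n with _ | _ | k
  · exact absurd rfl hn.out
  · exact det_hessian_one m A B hAper hBper hBinv
  · exact det_hessian_big m k A B hAper hBper hBinv

/-- **Instability criterion**: if the Hessian `H` is invertible and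
`σ · (-1)^{m + ind H} < 0` with `σ = sign ∏ det B_i`, then the monodromy
matrix has a real eigenvalue `ρ > 1`. -/
theorem instability_criterion (m n : ℕ) (hm : 0 < m) [NeZero n]
    (A B : ℤ → Matrix (Fin m) (Fin m) ℝ)
    (hAper : ∀ i, A (i + n) = A i) (hBper : ∀ i, B (i + n) = B i)
    (hAsym : ∀ i, (A i)ᵀ = A i) (hBinv : ∀ i, IsUnit (B i).det)
    (hH : IsUnit (hessian m n A B).det)
    (hcond : Real.sign (∏ i : Fin n, (B ((i : ℕ) : ℤ)).det) *
      (-1 : ℝ) ^ (m + matIndex (hessian m n A B)) < 0) :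
    ∃ ρ : ℝ, 1 < ρ ∧ (monodromy m n A B - ρ • 1).det = 0 := by
  have hs := det_sign _ (hessian_symm m n A B hBper hAsym) hH.ne_zero
  rw [det_hessian m n A B hAper hBper hBinv] at hs
  have : Nonempty (Fin m) := ⟨⟨0, hm⟩⟩
  apply exists_root
  · simp [Fintype.card_sum]
  generalize (monodromy m n A B - 1).det = d at *
  generalize (∏ i : Fin n, (B ((i : ℕ) : ℤ)).det) = π at *
  rw [pow_add] at hcond
  generalize matIndex (hessian m n A B) = k at *
  have hneg : π * ((-1) ^ m * (-1) ^ k) < 0 := by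
    rcases lt_trichotomy π 0 with h | h | h
    · rw [Real.sign_of_neg h] at hcond
      nlinarith
    · rw [h] at hcond; simp at hcond
    · rw [Real.sign_of_pos h] at hcond
      nlinarith
  by_contra hd
  push Not at hd
  have := mul_nonpos_of_nonpos_of_nonneg hneg.le hd
  linarith
end
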